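/- arXiv:1708.04918 — 2 statements merged into one kernel-verified Lean document; each statement's English description precedes it below -/
import Mathlib

section
/- Let t ∈ ℝ and f(x,y) = y² + x²y + (1/4)x⁴ + x⁵ + tx³. Then: (i) for all (x,y) ∈ ℝ², f_xx(x,y)·f_yy(x,y) − f_xy(x,y)² = 2·(2y + x² + 20x³ + 6tx), so the parabolic set of f is exactly the cubic curve {(x,y) : 2y + 20x³ + x² + 6tx = 0}; (ii) the flecnodal set of f is exactly the graph {(x,y) : y = −(100x⁴ + 10x³ + (1/2 + 20t)x² + 3tx + t²)}. -/
open Asymptotics Filter Set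

noncomputable section

/-- Partial derivative in the first variable (∂/∂x). -/
def pdx (f : ℝ × ℝ → ℝ) (p : ℝ × ℝ) : ℝ := deriv (fun s => f (s, p.2)) p.1

/-- Partial derivative in the second variable (∂/∂y). -/
def pdy (f : ℝ × ℝ → ℝ) (p : ℝ × ℝ) : ℝ := deriv (fun s => f (p.1, s)) p.2

/-- f_xx -/
def fxx (f : ℝ × ℝ → ℝ) : ℝ × ℝ → ℝ := pdx (pdx f)
/-- f_xy -/
def fxy (f : ℝ × ℝ → ℝ) : ℝ × ℝ → ℝ := pdy (pdx f)
/-- f_yy -/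
def fyy (f : ℝ × ℝ → ℝ) : ℝ × ℝ → ℝ := pdy (pdy f)

/-- The discriminant δ = f_xy² − f_xx·f_yy of the asymptotic BDE of `f`. -/
def bdeDiscr (f : ℝ × ℝ → ℝ) : ℝ × ℝ → ℝ := fun p => (fxy f p) ^ 2 - fxx f p * fyy f p

/-- The BDE `a dy² + 2b dxdy + c dx² = 0`, regarded as the family of quadratic
forms `ω_p(v) = a(p)v₂² + 2b(p)v₁v₂ + c(p)v₁²`. -/
def BDE (a b c : ℝ × ℝ → ℝ) : (ℝ × ℝ) → (ℝ × ℝ) → ℝ :=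
  fun p v => a p * v.2 ^ 2 + 2 * b p * v.1 * v.2 + c p * v.1 ^ 2

/-- The asymptotic BDE `f_yy dy² + 2 f_xy dxdy + f_xx dx² = 0` of the surface `z = f(x,y)`. -/
def asymBDE (f : ℝ × ℝ → ℝ) : (ℝ × ℝ) → (ℝ × ℝ) → ℝ := BDE (fyy f) (fxy f) (fxx f)

/-- `j^k f(0) = P` : the degree-k Taylor polynomial of `f` at the origin is `P`,
i.e. `f − P = o(‖(x,y)‖^k)` as `(x,y) → 0`. -/
def HasJetAt0 (f P : ℝ × ℝ → ℝ) (k : ℕ) : Prop :=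
  (fun p => f p - P p) =o[nhds (0 : ℝ × ℝ)] fun p => ‖p‖ ^ k

/-- `γ` is an integral curve of the BDE `ω` on the open interval `I`:
`γ` is C¹ on `I` with nowhere-vanishing derivative annihilating `ω`. -/
def IsIntegralCurveOnBDE (ω : (ℝ × ℝ) → (ℝ × ℝ) → ℝ) (γ : ℝ → ℝ × ℝ) (I : Set ℝ) : Prop :=
  (∃ a b : ℝ, I = Set.Ioo a b) ∧
  ∃ dγ : ℝ → ℝ × ℝ, ContinuousOn dγ I ∧
    ∀ t ∈ I, HasDerivAt γ (dγ t) t ∧ dγ t ≠ 0 ∧ ω (γ t) (dγ t) = 0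

/-- Topological equivalence of two BDEs at the origin: a local homeomorphism
fixing `0` sending integral curves of one to integral curves of the other. -/
def TopEquivAt0 (ω Ω : (ℝ × ℝ) → (ℝ × ℝ) → ℝ) : Prop :=
  ∃ (U V : Set (ℝ × ℝ)) (h hinv : ℝ × ℝ → ℝ × ℝ),
    IsOpen U ∧ IsOpen V ∧ (0 : ℝ × ℝ) ∈ U ∧ (0 : ℝ × ℝ) ∈ V ∧ h 0 = 0 ∧
    ContinuousOn h U ∧ ContinuousOn hinv V ∧
    Set.BijOn h U V ∧ Set.InvOn hinv h U V ∧
    (∀ γ I, IsIntegralCurveOnBDE ω γ I → Set.MapsTo γ I U →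
      ∃ σ J, IsIntegralCurveOnBDE Ω σ J ∧ h '' (γ '' I) = σ '' J) ∧
    (∀ σ J, IsIntegralCurveOnBDE Ω σ J → Set.MapsTo σ J V →
      ∃ γ I, IsIntegralCurveOnBDE ω γ I ∧ hinv '' (σ '' J) = γ '' I)

/-- Smooth equivalence of two BDEs at the origin: a local C^∞ diffeomorphism `h`
fixing `0` pulling one family of quadratic forms back to a nonvanishing multiple
of the other. -/
def SmoothEquivAt0 (ω Ω : (ℝ × ℝ) → (ℝ × ℝ) → ℝ) : Prop :=
  ∃ (U V : Set (ℝ × ℝ)) (h hinv : ℝ × ℝ → ℝ × ℝ) (ρ : ℝ × ℝ → ℝ),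
    IsOpen U ∧ IsOpen V ∧ (0 : ℝ × ℝ) ∈ U ∧ (0 : ℝ × ℝ) ∈ V ∧ h 0 = 0 ∧
    ContDiffOn ℝ (⊤ : ℕ∞) h U ∧ ContDiffOn ℝ (⊤ : ℕ∞) hinv V ∧
    Set.BijOn h U V ∧ Set.InvOn hinv h U V ∧
    ContDiffOn ℝ (⊤ : ℕ∞) ρ U ∧ (∀ p ∈ U, ρ p ≠ 0) ∧
    (∀ p ∈ U, ∀ v : ℝ × ℝ, Ω (h p) (fderiv ℝ h p v) = ρ p * ω p v)

/-- Fiber topological equivalence at `0` of two 2-parameter families of BDEs: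
a homeomorphism `φ` of parameter spaces (onto its image), fixing `0`, such that
corresponding members of the families are topologically equivalent at `0`. -/
def FiberTopEquivAt0 (ω Ω : (ℝ × ℝ) → (ℝ × ℝ) → (ℝ × ℝ) → ℝ) : Prop :=
  ∃ (W : Set (ℝ × ℝ)) (φ ψ : ℝ × ℝ → ℝ × ℝ),
    W ∈ nhds (0 : ℝ × ℝ) ∧ φ 0 = 0 ∧
    ContinuousOn φ W ∧ ContinuousOn ψ (φ '' W) ∧
    Set.InvOn ψ φ W (φ '' W) ∧
    ∀ q ∈ W, TopEquivAt0 (ω q) (Ω (φ q))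

/-! Completing the square gives `f(x, y) = (y + φ(x))² + ψ(x)` with `φ = x²/2`, `ψ = x⁵ + t x³`.
Put `u = y + φ(x)` and, for a direction `v = (a, b)`, `w = b + φ'(x) a`. Then
`D²f(v, v) = 2 w² + γ a²` and `D³f(v, v, v) = 6 φ'' w a² + δ a³`, where `γ = 2 u φ'' + ψ''` is half
the Hessian determinant and `δ = 2 u φ⁽³⁾ + ψ⁽³⁾`. The first form forces `a ≠ 0`; where `φ'' ≠ 0`,
the second then determines `w / a`, and eliminating it leaves `δ² + 18 (φ'')² γ = 0`. -/

section IteratedDeriv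

variable {𝕜 : Type*} [NontriviallyNormedField 𝕜]

theorem iteratedDeriv_comp_add_smul {E F : Type*} [NormedAddCommGroup E] [NormedSpace 𝕜 E]
    [NormedAddCommGroup F] [NormedSpace 𝕜 F] {f : E → F} {n : ℕ} (hf : ContDiff 𝕜 n f) (x v : E) :
    iteratedDeriv n (fun s : 𝕜 => f (x + s • v)) =
      fun s => iteratedFDeriv 𝕜 n f (x + s • v) fun _ => v := by
  induction n with
  | zero => simp
  | succ n ih =>
    have hn : (n : WithTop ℕ∞) ≤ (n + 1 : ℕ) := by exact_mod_cast n.le_succ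
    rw [iteratedDeriv_succ, ih (hf.of_le hn)]
    funext s
    exact ContDiffAt.deriv_fderiv_add_smul (by exact_mod_cast hf.contDiffAt)

theorem iteratedDeriv_comp_add_mul_zero {g : 𝕜 → 𝕜} {n : ℕ} (hg : ContDiff 𝕜 n g) (x a : 𝕜) :
    iteratedDeriv n (fun s => g (x + s * a)) 0 = a ^ n * iteratedDeriv n g x := by
  simpa [iteratedFDeriv_apply_eq_iteratedDeriv_mul_prod] using
    congrFun (iteratedDeriv_comp_add_smul hg x a) 0

theorem deriv_affine_add_comp_affine_zero {g : 𝕜 → 𝕜} {x : 𝕜} (hg : DifferentiableAt 𝕜 g x)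
    (a y b : 𝕜) :
    deriv (fun s => y + s * b + g (x + s * a)) 0 = b + deriv g x * a := by
  have hline (c d : 𝕜) : HasDerivAt (fun s => c + s * d) d 0 := by
    simpa using ((hasDerivAt_id (0 : 𝕜)).mul_const d).const_add c
  exact ((hline y b).fun_add (hg.hasDerivAt.comp_of_eq 0 (hline x a) (by simp))).deriv

theorem iteratedDeriv_affine_add_comp_affine_zero {g : 𝕜 → 𝕜} {n : ℕ} (hn : 2 ≤ n)
    (hg : ContDiff 𝕜 n g) (x a y b : 𝕜) :
    iteratedDeriv n (fun s => y + s * b + g (x + s * a)) 0 = a ^ n * iteratedDeriv n g x := by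
  have haffine : iteratedDeriv n (fun s => y + s * b) 0 = 0 := by
    rw [iteratedDeriv_const_add (by lia), iteratedDeriv_mul_const_field, iteratedDeriv_fun_id_zero,
      if_neg (by lia), zero_mul]
  rw [iteratedDeriv_fun_add (by fun_prop) (by fun_prop), haffine, zero_add,
    iteratedDeriv_comp_add_mul_zero hg]

variable {u : 𝕜 → 𝕜} {x : 𝕜}

theorem iteratedDeriv_two_sq (hu : ContDiffAt 𝕜 2 u x) :
    iteratedDeriv 2 (fun s => u s ^ 2) x = 2 * (deriv u x ^ 2 + u x * iteratedDeriv 2 u x) := by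
  simp only [sq (u _)]
  rw [iteratedDeriv_fun_mul hu hu]
  simp only [Nat.reduceAdd, Finset.sum_range_succ, Finset.range_one, Finset.sum_singleton,
    Nat.choose, Nat.cast_one, iteratedDeriv_zero, one_mul, tsub_zero, add_zero, Nat.cast_ofNat,
    iteratedDeriv_one, Nat.add_one_sub_one, tsub_self]
  ring

theorem iteratedDeriv_three_sq (hu : ContDiffAt 𝕜 3 u x) :
    iteratedDeriv 3 (fun s => u s ^ 2) x =
      2 * (3 * deriv u x * iteratedDeriv 2 u x + u x * iteratedDeriv 3 u x) := by
  simp only [sq (u _)]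
  rw [iteratedDeriv_fun_mul hu hu]
  simp only [Nat.reduceAdd, Finset.sum_range_succ, Finset.range_one, Finset.sum_singleton,
    Nat.choose, Nat.cast_one, iteratedDeriv_zero, one_mul, tsub_zero, add_zero, Nat.cast_ofNat,
    iteratedDeriv_one, Nat.add_one_sub_one, Nat.reduceSub, tsub_self]
  ring

end IteratedDeriv

/-- The flecnodal set of `f`: the points at which some line has at least four-point contact with
the graph of `f`. -/
def flecnodalSet (f : ℝ × ℝ → ℝ) : Set (ℝ × ℝ) :=
  {p | ∃ v : ℝ × ℝ, v ≠ 0 ∧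
    iteratedFDeriv ℝ 2 f p ![v, v] = 0 ∧ iteratedFDeriv ℝ 3 f p ![v, v, v] = 0}

/-- The function `(x, y) ↦ (y + φ(x))² + ψ(x)`, the general form of a monic quadratic in `y` after
completing the square. -/
def completedSquare (φ ψ : ℝ → ℝ) (p : ℝ × ℝ) : ℝ := (p.2 + φ p.1) ^ 2 + ψ p.1

section CompletedSquare

variable {φ ψ : ℝ → ℝ}

theorem fxx_completedSquare {p : ℝ × ℝ} (hφ : ContDiffAt ℝ 2 φ p.1)
    (hψ : ContDiffAt ℝ 2 ψ p.1) :
    fxx (completedSquare φ ψ) p =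
      2 * (deriv φ p.1 ^ 2 + (p.2 + φ p.1) * iteratedDeriv 2 φ p.1) + iteratedDeriv 2 ψ p.1 := by
  have hu : ContDiffAt ℝ 2 (fun s => p.2 + φ s) p.1 := by fun_prop
  calc fxx (completedSquare φ ψ) p
      = iteratedDeriv 2 (fun s => (p.2 + φ s) ^ 2 + ψ s) p.1 := by
        rw [iteratedDeriv_succ, iteratedDeriv_one]; rfl
    _ = _ := by
        rw [iteratedDeriv_fun_add (by fun_prop) (by fun_prop), iteratedDeriv_two_sq hu,
          iteratedDeriv_const_add two_pos, deriv_const_add]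

theorem fyy_completedSquare (p : ℝ × ℝ) : fyy (completedSquare φ ψ) p = 2 := by
  simp [fyy, pdy, completedSquare]

theorem pdx_completedSquare {p : ℝ × ℝ} (hφ : DifferentiableAt ℝ φ p.1)
    (hψ : DifferentiableAt ℝ ψ p.1) :
    pdx (completedSquare φ ψ) p = 2 * (p.2 + φ p.1) * deriv φ p.1 + deriv ψ p.1 := by
  have hu := hφ.hasDerivAt.const_add p.2
  simpa [pdx, completedSquare] using ((hu.fun_pow 2).fun_add hψ.hasDerivAt).deriv

theorem fxy_completedSquare {p : ℝ × ℝ} (hφ : DifferentiableAt ℝ φ p.1)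
    (hψ : DifferentiableAt ℝ ψ p.1) :
    fxy (completedSquare φ ψ) p = 2 * deriv φ p.1 := by
  have hfx (s : ℝ) : pdx (completedSquare φ ψ) (p.1, s) =
      2 * (s + φ p.1) * deriv φ p.1 + deriv ψ p.1 :=
    pdx_completedSquare hφ hψ
  simp [fxy, pdy, hfx]

theorem hessianDet_completedSquare {p : ℝ × ℝ} (hφ : ContDiffAt ℝ 2 φ p.1)
    (hψ : ContDiffAt ℝ 2 ψ p.1) :
    fxx (completedSquare φ ψ) p * fyy (completedSquare φ ψ) p - fxy (completedSquare φ ψ) p ^ 2 =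
      2 * (2 * (p.2 + φ p.1) * iteratedDeriv 2 φ p.1 + iteratedDeriv 2 ψ p.1) := by
  rw [fxx_completedSquare hφ hψ, fyy_completedSquare,
    fxy_completedSquare (hφ.differentiableAt two_ne_zero) (hψ.differentiableAt two_ne_zero)]
  ring

theorem contDiff_completedSquare {n : WithTop ℕ∞} (hφ : ContDiff ℝ n φ) (hψ : ContDiff ℝ n ψ) :
    ContDiff ℝ n (completedSquare φ ψ) := by
  unfold completedSquare
  fun_prop

theorem iteratedFDeriv_completedSquare_eq_iteratedDeriv {n : ℕ} (hφ : ContDiff ℝ n φ)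
    (hψ : ContDiff ℝ n ψ) (p v : ℝ × ℝ) :
    iteratedFDeriv ℝ n (completedSquare φ ψ) p (fun _ => v) =
      iteratedDeriv n (fun s => (p.2 + s * v.2 + φ (p.1 + s * v.1)) ^ 2) 0 +
        v.1 ^ n * iteratedDeriv n ψ p.1 := by
  rw [← iteratedDeriv_comp_add_mul_zero hψ, ← iteratedDeriv_fun_add (by fun_prop) (by fun_prop)]
  simpa [completedSquare] using
    (congrFun (iteratedDeriv_comp_add_smul (contDiff_completedSquare hφ hψ) p v) 0).symm

theorem iteratedFDeriv_two_completedSquare (hφ : ContDiff ℝ 2 φ) (hψ : ContDiff ℝ 2 ψ)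
    (p v : ℝ × ℝ) :
    iteratedFDeriv ℝ 2 (completedSquare φ ψ) p ![v, v] =
      2 * (v.2 + deriv φ p.1 * v.1) ^ 2 +
        (2 * (p.2 + φ p.1) * iteratedDeriv 2 φ p.1 + iteratedDeriv 2 ψ p.1) * v.1 ^ 2 := by
  have hconst : ![v, v] = fun _ => v := by ext i : 1; fin_cases i <;> rfl
  rw [hconst, iteratedFDeriv_completedSquare_eq_iteratedDeriv hφ hψ,
    iteratedDeriv_two_sq (by fun_prop),
    deriv_affine_add_comp_affine_zero (hφ.differentiable two_ne_zero _),
    iteratedDeriv_affine_add_comp_affine_zero le_rfl hφ]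
  ring_nf

theorem iteratedFDeriv_three_completedSquare (hφ : ContDiff ℝ 3 φ) (hψ : ContDiff ℝ 3 ψ)
    (p v : ℝ × ℝ) :
    iteratedFDeriv ℝ 3 (completedSquare φ ψ) p ![v, v, v] =
      6 * iteratedDeriv 2 φ p.1 * (v.2 + deriv φ p.1 * v.1) * v.1 ^ 2 +
        (2 * (p.2 + φ p.1) * iteratedDeriv 3 φ p.1 + iteratedDeriv 3 ψ p.1) * v.1 ^ 3 := by
  have hconst : ![v, v, v] = fun _ => v := by ext i : 1; fin_cases i <;> rfl
  have hφ_two : ContDiff ℝ 2 φ := hφ.of_le (by norm_num)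
  rw [hconst, iteratedFDeriv_completedSquare_eq_iteratedDeriv hφ hψ,
    iteratedDeriv_three_sq (by fun_prop),
    deriv_affine_add_comp_affine_zero (hφ.differentiable three_ne_zero _),
    iteratedDeriv_affine_add_comp_affine_zero le_rfl hφ_two,
    iteratedDeriv_affine_add_comp_affine_zero (by norm_num) hφ]
  ring_nf

end CompletedSquare

theorem exists_common_zero_quadratic_cubic_iff {R : Type*} [CommRing R] [IsDomain R] [CharZero R]
    {κ : R} (hκ : κ ≠ 0) (β γ δ : R) :
    (∃ v : R × R, v ≠ 0 ∧ 2 * (v.2 + β * v.1) ^ 2 + γ * v.1 ^ 2 = 0 ∧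
      6 * κ * (v.2 + β * v.1) * v.1 ^ 2 + δ * v.1 ^ 3 = 0) ↔ δ ^ 2 + 18 * κ ^ 2 * γ = 0 := by
  constructor
  · rintro ⟨⟨a, b⟩, hv, hquad, hcubic⟩
    dsimp only at hquad hcubic
    have ha : a ≠ 0 := by
      rintro rfl
      exact hv (by simpa using hquad)
    have hslope : 6 * κ * (b + β * a) + δ * a = 0 :=
      mul_left_cancel₀ (pow_ne_zero 2 ha) (by linear_combination hcubic)
    refine mul_left_cancel₀ (pow_ne_zero 2 ha) ?_
    linear_combination 18 * κ ^ 2 * hquad + (δ * a - 6 * κ * (b + β * a)) * hslope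
  · intro h
    refine ⟨(6 * κ, -δ - 6 * κ * β), by simp [hκ], ?_, by ring⟩
    linear_combination 2 * h

theorem mem_flecnodalSet_completedSquare_iff {φ ψ : ℝ → ℝ} (hφ : ContDiff ℝ 3 φ)
    (hψ : ContDiff ℝ 3 ψ) {p : ℝ × ℝ} (hp : iteratedDeriv 2 φ p.1 ≠ 0) :
    p ∈ flecnodalSet (completedSquare φ ψ) ↔
      (2 * (p.2 + φ p.1) * iteratedDeriv 3 φ p.1 + iteratedDeriv 3 ψ p.1) ^ 2 +
        18 * iteratedDeriv 2 φ p.1 ^ 2 *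
          (2 * (p.2 + φ p.1) * iteratedDeriv 2 φ p.1 + iteratedDeriv 2 ψ p.1) = 0 := by
  have two_le_three : (2 : WithTop ℕ∞) ≤ 3 := by norm_num
  rw [← exists_common_zero_quadratic_cubic_iff hp (deriv φ p.1)]
  simp only [flecnodalSet, mem_ofPred_eq, iteratedFDeriv_three_completedSquare hφ hψ,
    iteratedFDeriv_two_completedSquare (hφ.of_le two_le_three) (hψ.of_le two_le_three)]

theorem iteratedDeriv_two_sq_div_two (x : ℝ) : iteratedDeriv 2 (fun s : ℝ => s ^ 2 / 2) x = 1 := by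
  norm_num [iteratedDeriv_pow, Nat.descFactorial]

theorem iteratedDeriv_three_sq_div_two (x : ℝ) :
    iteratedDeriv 3 (fun s : ℝ => s ^ 2 / 2) x = 0 := by
  norm_num [iteratedDeriv_pow, Nat.descFactorial]

theorem iteratedDeriv_pow_five_add_mul_pow_three (t : ℝ) (k : ℕ) (x : ℝ) :
    iteratedDeriv k (fun s : ℝ => s ^ 5 + t * s ^ 3) x =
      Nat.descFactorial 5 k * x ^ (5 - k) + t * (Nat.descFactorial 3 k * x ^ (3 - k)) := by
  rw [iteratedDeriv_fun_add (by fun_prop) (by fun_prop), iteratedDeriv_const_mul_field,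
    iteratedDeriv_pow, iteratedDeriv_pow]

theorem iteratedDeriv_two_pow_five_add_mul_pow_three (t x : ℝ) :
    iteratedDeriv 2 (fun s : ℝ => s ^ 5 + t * s ^ 3) x = 20 * x ^ 3 + 6 * t * x := by
  rw [iteratedDeriv_pow_five_add_mul_pow_three, show Nat.descFactorial 5 2 = 20 from rfl,
    show Nat.descFactorial 3 2 = 6 from rfl]
  push_cast
  ring

theorem iteratedDeriv_three_pow_five_add_mul_pow_three (t x : ℝ) :
    iteratedDeriv 3 (fun s : ℝ => s ^ 5 + t * s ^ 3) x = 60 * x ^ 2 + 6 * t := by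
  rw [iteratedDeriv_pow_five_add_mul_pow_three, show Nat.descFactorial 5 3 = 60 from rfl,
    show Nat.descFactorial 3 3 = 6 from rfl]
  push_cast
  ring

/-- for `f(x,y) = y² + x²y + (1/4)x⁴ + x⁵ + tx³`:
(i) `det Hess f = 2(2y + x² + 20x³ + 6tx)`, so the parabolic set is the cubic
curve `{2y + 20x³ + x² + 6tx = 0}`; (ii) the flecnodal set of `f` is the graph
`{y = −(100x⁴ + 10x³ + (1/2 + 20t)x² + 3tx + t²)}`. -/
theorem stmt17 (t : ℝ) (f : ℝ × ℝ → ℝ)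
    (hdef : f = fun p =>
      p.2 ^ 2 + p.1 ^ 2 * p.2 + (1 / 4) * p.1 ^ 4 + p.1 ^ 5 + t * p.1 ^ 3) :
    (∀ p : ℝ × ℝ, fxx f p * fyy f p - (fxy f p) ^ 2 =
      2 * (2 * p.2 + p.1 ^ 2 + 20 * p.1 ^ 3 + 6 * t * p.1)) ∧
    {p : ℝ × ℝ | fxx f p * fyy f p - (fxy f p) ^ 2 = 0} =
      {p : ℝ × ℝ | 2 * p.2 + 20 * p.1 ^ 3 + p.1 ^ 2 + 6 * t * p.1 = 0} ∧
    {p : ℝ × ℝ | ∃ v : ℝ × ℝ, v ≠ 0 ∧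
        iteratedFDeriv ℝ 2 f p ![v, v] = 0 ∧
        iteratedFDeriv ℝ 3 f p ![v, v, v] = 0} =
      {p : ℝ × ℝ | p.2 = -(100 * p.1 ^ 4 + 10 * p.1 ^ 3 + (1 / 2 + 20 * t) * p.1 ^ 2 +
        3 * t * p.1 + t ^ 2)} := by
  have hf : f = completedSquare (fun x => x ^ 2 / 2) (fun x => x ^ 5 + t * x ^ 3) := by
    rw [hdef]
    ext p
    simp only [completedSquare]
    ring
  have hdet : ∀ p : ℝ × ℝ, fxx f p * fyy f p - (fxy f p) ^ 2 =
      2 * (2 * p.2 + p.1 ^ 2 + 20 * p.1 ^ 3 + 6 * t * p.1) := by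
    intro p
    rw [hf, hessianDet_completedSquare (by fun_prop) (by fun_prop), iteratedDeriv_two_sq_div_two,
      iteratedDeriv_two_pow_five_add_mul_pow_three]
    ring
  refine ⟨hdet, ?_, ?_⟩
  · ext p
    simp only [mem_ofPred_eq, hdet]
    constructor <;> intro h <;> linarith
  · change flecnodalSet f = _
    ext p
    rw [hf, mem_flecnodalSet_completedSquare_iff (by fun_prop) (by fun_prop)
      ((iteratedDeriv_two_sq_div_two _).trans_ne one_ne_zero),
      iteratedDeriv_two_sq_div_two, iteratedDeriv_three_sq_div_two,
      iteratedDeriv_two_pow_five_add_mul_pow_three,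
      iteratedDeriv_three_pow_five_add_mul_pow_three, mem_ofPred_eq]
    exact ⟨fun h => by linear_combination h / 36, fun h => by linear_combination 36 * h⟩
end
end

section
/- For t, u ∈ ℝ let f(x,y;t,u) = y² + x⁵ + x³y + tx² + ux²y, and let p(x,y;t,u) = f_xx·f_yy − f_xy² be the determinant of the Hessian of f in (x,y). Then: (i) for all (x,y,t,u), p(x,y;t,u) = 12xy + 40x³ − 9x⁴ + 4t + 4uy − 4u²x² − 12ux³; (ii) for fixed (t,u), there exists a point (x,y) with p = ∂p/∂x = ∂p/∂y = 0 (i.e. the parabolic curve of f(·,·;t,u) has a singular point) if and only if t = (10/27)u³ + (1/36)u⁴, in which case the unique such point is (x,y) = (−u/3, −10u²/9). -/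
open Asymptotics Filter Set

noncomputable section

/-- The family of surfaces `f(x,y;t,u) = y² + x⁵ + x³y + tx² + ux²y`. -/
def F18 (t u : ℝ) : ℝ × ℝ → ℝ := fun p =>
  p.2 ^ 2 + p.1 ^ 5 + p.1 ^ 3 * p.2 + t * p.1 ^ 2 + u * p.1 ^ 2 * p.2

/-- `p(x,y;t,u) = f_xx·f_yy − f_xy²`, the determinant of the Hessian of `F18`. -/
def P18 (t u : ℝ) : ℝ × ℝ → ℝ := fun p =>
  fxx (F18 t u) p * fyy (F18 t u) p - (fxy (F18 t u) p) ^ 2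

/-!
If `f = a(x) + b(x) y + k y²` with `k` constant, then `f_yy = 2k` and `f_xy = b'(x)`, so the
Hessian determinant `(2k a'' - b'²) + 2k b'' y` is affine in `y`. An affine `α(x) + β(x) y` has
`y`-derivative `β(x)`, so its singular zeros lie over the zeros of `β`; over a simple zero `x₀`
there is one exactly when `α(x₀) = 0`, at the height `y` solving `α'(x₀) + β'(x₀) y = 0`. For the
family at hand `β(x) = 12x + 4u`, whose only zero `-u/3` is simple.
-/

/-- The function `(x, y) ↦ a(x) + b(x) y + k y²`, quadratic in `y` with constant leading
coefficient. Both the surfaces `F18` and, with `k = 0`, their Hessian determinants are of this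
form. -/
def quadraticInY (a b : ℝ → ℝ) (k : ℝ) : ℝ × ℝ → ℝ := fun p => a p.1 + b p.1 * p.2 + k * p.2 ^ 2

/-- The determinant `f_xx f_yy - f_xy²` of the Hessian of `f`, whose zero set is the parabolic
curve. -/
def hessianDet (f : ℝ × ℝ → ℝ) : ℝ × ℝ → ℝ := fun p => fxx f p * fyy f p - fxy f p ^ 2

/-- `q` is a singular point of the curve `g = 0`: both `g` and its gradient vanish at `q`. -/
def IsSingularZero (g : ℝ × ℝ → ℝ) (q : ℝ × ℝ) : Prop := g q = 0 ∧ pdx g q = 0 ∧ pdy g q = 0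

section QuadraticInY

variable {a b : ℝ → ℝ} {k : ℝ}

lemma pdx_quadraticInY_apply {a' b' : ℝ} {q : ℝ × ℝ} (ha : HasDerivAt a a' q.1)
    (hb : HasDerivAt b b' q.1) : pdx (quadraticInY a b k) q = a' + b' * q.2 :=
  ((ha.fun_add (hb.mul_const q.2)).add_const (k * q.2 ^ 2)).deriv

lemma pdx_quadraticInY {a' b' : ℝ → ℝ} (ha : ∀ x, HasDerivAt a (a' x) x)
    (hb : ∀ x, HasDerivAt b (b' x) x) : pdx (quadraticInY a b k) = quadraticInY a' b' 0 := by
  funext q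
  simp [pdx_quadraticInY_apply (ha q.1) (hb q.1), quadraticInY]

variable (a b k) in
lemma pdy_quadraticInY : pdy (quadraticInY a b k) = quadraticInY b (fun _ => 2 * k) 0 := by
  funext ⟨x, y⟩
  have hderiv : HasDerivAt (fun s => a x + b x * s + k * s ^ 2)
      (b x * 1 + k * (2 * y ^ (2 - 1) * 1)) y :=
    (((hasDerivAt_id' y).const_mul (b x)).const_add (a x)).fun_add
      (((hasDerivAt_id' y).fun_pow 2).const_mul k)
  calc pdy (quadraticInY a b k) (x, y) = b x * 1 + k * (2 * y ^ (2 - 1) * 1) := hderiv.deriv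
    _ = quadraticInY b (fun _ => 2 * k) 0 (x, y) := by simp only [quadraticInY]; ring

lemma hessianDet_quadraticInY {a' a'' b' b'' : ℝ → ℝ}
    (ha : ∀ x, HasDerivAt a (a' x) x) (ha' : ∀ x, HasDerivAt a' (a'' x) x)
    (hb : ∀ x, HasDerivAt b (b' x) x) (hb' : ∀ x, HasDerivAt b' (b'' x) x) :
    hessianDet (quadraticInY a b k) =
      quadraticInY (fun x => 2 * k * a'' x - b' x ^ 2) (fun x => 2 * k * b'' x) 0 := by
  have hxx : fxx (quadraticInY a b k) = quadraticInY a'' b'' 0 := by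
    rw [fxx, pdx_quadraticInY ha hb, pdx_quadraticInY ha' hb']
  have hxy : fxy (quadraticInY a b k) = quadraticInY b' (fun _ => 2 * 0) 0 := by
    rw [fxy, pdx_quadraticInY ha hb, pdy_quadraticInY]
  have hyy : fyy (quadraticInY a b k) = quadraticInY (fun _ => 2 * k) (fun _ => 2 * 0) 0 := by
    rw [fyy, pdy_quadraticInY, pdy_quadraticInY]
  funext q
  simp only [hessianDet, hxx, hxy, hyy, quadraticInY]
  ring

end QuadraticInY

lemma isSingularZero_quadraticInY_zero_iff {α β : ℝ → ℝ} {α' β' x₀ : ℝ}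
    (hβ_zero : ∀ x, β x = 0 ↔ x = x₀) (hα : HasDerivAt α α' x₀) (hβ : HasDerivAt β β' x₀)
    (hβ' : β' ≠ 0) (q : ℝ × ℝ) :
    IsSingularZero (quadraticInY α β 0) q ↔ α x₀ = 0 ∧ q = (x₀, -α' / β') := by
  obtain ⟨x, y⟩ := q
  have hpdy : pdy (quadraticInY α β 0) (x, y) = β x := by
    simp [pdy_quadraticInY, quadraticInY]
  have hheight : α' + β' * y = 0 ↔ y = -α' / β' := by
    rw [eq_div_iff hβ', add_comm, ← eq_neg_iff_add_eq_zero, mul_comm]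
  rw [IsSingularZero, hpdy, hβ_zero, Prod.mk.injEq]
  by_cases hx : x = x₀
  · subst hx
    have hval : quadraticInY α β 0 (x, y) = α x := by
      simp [quadraticInY, (hβ_zero x).2 rfl]
    rw [hval, pdx_quadraticInY_apply hα hβ, hheight]
    tauto
  · tauto

section Family

variable (t u : ℝ)

lemma F18_eq_quadraticInY :
    F18 t u = quadraticInY (fun x => x ^ 5 + t * x ^ 2) (fun x => x ^ 3 + u * x ^ 2) 1 := by
  funext p
  simp only [F18, quadraticInY]
  ring

lemma P18_eq_quadraticInY :
    P18 t u = quadraticInY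
      (fun x => 40 * x ^ 3 - 9 * x ^ 4 + 4 * t - 4 * u ^ 2 * x ^ 2 - 12 * u * x ^ 3)
      (fun x => 12 * x + 4 * u) 0 := by
  have ha (x : ℝ) : HasDerivAt (fun x => x ^ 5 + t * x ^ 2) (5 * x ^ 4 + t * (2 * x)) x := by
    simpa using (hasDerivAt_pow 5 x).fun_add ((hasDerivAt_pow 2 x).const_mul t)
  have ha' (x : ℝ) : HasDerivAt (fun x => 5 * x ^ 4 + t * (2 * x))
      (5 * (4 * x ^ 3) + t * 2) x := by
    simpa using ((hasDerivAt_pow 4 x).const_mul 5).fun_add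
      (((hasDerivAt_id' x).const_mul 2).const_mul t)
  have hb (x : ℝ) : HasDerivAt (fun x => x ^ 3 + u * x ^ 2) (3 * x ^ 2 + u * (2 * x)) x := by
    simpa using (hasDerivAt_pow 3 x).fun_add ((hasDerivAt_pow 2 x).const_mul u)
  have hb' (x : ℝ) : HasDerivAt (fun x => 3 * x ^ 2 + u * (2 * x)) (3 * (2 * x) + u * 2) x := by
    simpa using ((hasDerivAt_pow 2 x).const_mul 3).fun_add
      (((hasDerivAt_id' x).const_mul 2).const_mul u)
  change hessianDet (F18 t u) = _
  rw [F18_eq_quadraticInY, hessianDet_quadraticInY ha ha' hb hb']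
  congr 1 <;> funext x <;> ring

lemma isSingularZero_P18_iff (q : ℝ × ℝ) :
    IsSingularZero (P18 t u) q ↔
      t = (10 / 27) * u ^ 3 + (1 / 36) * u ^ 4 ∧ q = (-u / 3, -10 * u ^ 2 / 9) := by
  set α : ℝ → ℝ := fun x => 40 * x ^ 3 - 9 * x ^ 4 + 4 * t - 4 * u ^ 2 * x ^ 2 - 12 * u * x ^ 3
    with hα_def
  have hβ_zero (x : ℝ) : 12 * x + 4 * u = 0 ↔ x = -u / 3 := by constructor <;> intro <;> linarith
  have hα : HasDerivAt α (40 * u ^ 2 / 3) (-u / 3) := by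
    refine ((((((hasDerivAt_pow 3 _).const_mul 40).fun_sub
      ((hasDerivAt_pow 4 _).const_mul 9)).add_const (4 * t)).fun_sub
      ((hasDerivAt_pow 2 _).const_mul (4 * u ^ 2))).fun_sub
      ((hasDerivAt_pow 3 _).const_mul (12 * u))).congr_deriv ?_
    norm_num
    ring
  have hβ : HasDerivAt (fun x => 12 * x + 4 * u) 12 (-u / 3) := by
    simpa using ((hasDerivAt_id' (-u / 3)).const_mul 12).add_const (4 * u)
  have hα_zero : α (-u / 3) = 0 ↔ t = (10 / 27) * u ^ 3 + (1 / 36) * u ^ 4 := by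
    have hα_val : α (-u / 3) = 4 * (t - ((10 / 27) * u ^ 3 + (1 / 36) * u ^ 4)) := by
      simp only [hα_def]
      ring
    rw [hα_val, mul_eq_zero_iff_left four_ne_zero, sub_eq_zero]
  have hheight : -(40 * u ^ 2 / 3) / 12 = -10 * u ^ 2 / 9 := by ring
  rw [P18_eq_quadraticInY,
    isSingularZero_quadraticInY_zero_iff hβ_zero hα hβ (by norm_num), hα_zero, hheight]

end Family

/-- (i) `p(x,y;t,u) = 12xy + 40x³ − 9x⁴ + 4t + 4uy − 4u²x² − 12ux³`;
(ii) for fixed `(t,u)` the parabolic curve has a singular point iff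
`t = (10/27)u³ + (1/36)u⁴`, in which case the unique singular point is
`(x,y) = (−u/3, −10u²/9)`. -/
theorem stmt18 :
    (∀ (t u : ℝ) (p : ℝ × ℝ),
      P18 t u p = 12 * p.1 * p.2 + 40 * p.1 ^ 3 - 9 * p.1 ^ 4 + 4 * t + 4 * u * p.2 -
        4 * u ^ 2 * p.1 ^ 2 - 12 * u * p.1 ^ 3) ∧
    ∀ t u : ℝ,
      ((∃ q : ℝ × ℝ, P18 t u q = 0 ∧ pdx (P18 t u) q = 0 ∧ pdy (P18 t u) q = 0) ↔
        t = (10 / 27) * u ^ 3 + (1 / 36) * u ^ 4) ∧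
      (t = (10 / 27) * u ^ 3 + (1 / 36) * u ^ 4 →
        ∀ q : ℝ × ℝ,
          ((P18 t u q = 0 ∧ pdx (P18 t u) q = 0 ∧ pdy (P18 t u) q = 0) ↔
            q = (-u / 3, -10 * u ^ 2 / 9))) := by
  refine ⟨fun t u p => ?_, fun t u => ⟨⟨?_, fun ht => ?_⟩, fun ht q => ?_⟩⟩
  · rw [P18_eq_quadraticInY]
    simp only [quadraticInY]
    ring
  · rintro ⟨q, hq⟩
    exact ((isSingularZero_P18_iff t u q).1 hq).1
  · exact ⟨_, (isSingularZero_P18_iff t u _).2 ⟨ht, rfl⟩⟩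
  · exact (isSingularZero_P18_iff t u q).trans (and_iff_right ht)
end
end
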